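/- One-step conditional variance remainder bound (Lemma 3.1, item 4(b)). Under the one-step setup, assume in addition E[YYᵀ] = Λ. Define H∘ := var∘(Y̲Ȳᵀ) and R∘ := var∘(T⁺ − T) − η²·H∘. Then ‖R∘‖₂ ≤ 2·ν₁·ν^{1/2}·λ_{1∼p}²·μ²·η²·τ·(1 + (1 + ν₁ν^{−1/2})·τ + τ² + τ³/2) + 8·ν·λ_{1∼p}³·μ³·η³·(1+τ²)^{1/2}·(1 + τ² + ν₁ν^{−1/2}·τ)². -/

import Mathlib

open MeasureTheory Matrix

/-- Spectral norm (ℓ²-operator norm) of a real matrix. -/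
noncomputable def specNorm {m n : ℕ} (A : Matrix (Fin m) (Fin n) ℝ) : ℝ :=
  sSup {c : ℝ | ∃ x : Fin n → ℝ, ∑ j, x j ^ 2 ≤ 1 ∧ c = Real.sqrt (∑ i, (A.mulVec x) i ^ 2)}

/-- Top `p×p` block of a `d×p` matrix. -/
def topBlock {d p : ℕ} (h : p ≤ d) (X : Matrix (Fin d) (Fin p) ℝ) :
    Matrix (Fin p) (Fin p) ℝ :=
  Matrix.of fun i j => X (Fin.castLE h i) j

/-- Bottom `(d−p)×p` block of a `d×p` matrix. -/
def botBlock {d p : ℕ} (X : Matrix (Fin d) (Fin p) ℝ) :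
    Matrix (Fin (d - p)) (Fin p) ℝ :=
  Matrix.of fun i j => X ⟨p + i, by have := i.isLt; omega⟩ j

section helpers
open scoped Matrix.Norms.L2Operator

lemma oj_le_nrm {m n : ℕ} (A : Matrix (Fin m) (Fin n) ℝ) (x : Fin n → ℝ) :
    ∑ i, (A.mulVec x) i ^ 2 ≤ ‖A‖ ^ 2 * ∑ j, x j ^ 2 := by
  have h := A.l2_opNorm_mulVec (WithLp.toLp 2 x)
  have h2 := pow_le_pow_left₀ (norm_nonneg _) h 2
  rw [mul_pow, EuclideanSpace.norm_sq_eq, EuclideanSpace.norm_sq_eq] at h2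
  simpa using h2

lemma oj_nrm_le {m n : ℕ} (A : Matrix (Fin m) (Fin n) ℝ) (c : ℝ) (hc : 0 ≤ c)
    (h : ∀ x : Fin n → ℝ, ∑ i, (A.mulVec x) i ^ 2 ≤ c ^ 2 * ∑ j, x j ^ 2) : ‖A‖ ≤ c := by
  rw [Matrix.l2_opNorm_def]
  refine ContinuousLinearMap.opNorm_le_bound _ hc fun x => ?_
  refine (sq_le_sq₀ (by positivity) (by positivity)).mp ?_
  rw [mul_pow, EuclideanSpace.norm_sq_eq, EuclideanSpace.norm_sq_eq]
  simpa using h x.ofLp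

lemma oj_spec_bdd {m n : ℕ} (A : Matrix (Fin m) (Fin n) ℝ) :
    BddAbove {c : ℝ | ∃ x : Fin n → ℝ, ∑ j, x j ^ 2 ≤ 1 ∧
      c = Real.sqrt (∑ i, (A.mulVec x) i ^ 2)} := by
  refine ⟨‖A‖, ?_⟩
  rintro c ⟨x, hx, rfl⟩
  refine Real.sqrt_le_iff.mpr ⟨norm_nonneg _, (oj_le_nrm A x).trans ?_⟩
  nlinarith [sq_nonneg ‖A‖]

lemma oj_spec_nonneg {m n : ℕ} (A : Matrix (Fin m) (Fin n) ℝ) : 0 ≤ specNorm A := by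
  refine le_csSup (oj_spec_bdd A) ⟨0, by simp, by simp⟩

lemma oj_nrm_le_spec {m n : ℕ} (A : Matrix (Fin m) (Fin n) ℝ) : ‖A‖ ≤ specNorm A := by
  refine oj_nrm_le A _ (oj_spec_nonneg A) fun x => ?_
  set S := ∑ j, x j ^ 2 with hS
  have hS0 : 0 ≤ S := Finset.sum_nonneg fun _ _ => sq_nonneg _
  rcases hS0.eq_or_lt with h0 | h0
  · have := oj_le_nrm A x
    rw [← hS, ← h0] at this
    rw [← h0]; simpa using this
  · have hk : Real.sqrt (∑ i, (A.mulVec ((Real.sqrt S)⁻¹ • x)) i ^ 2) ≤ specNorm A := by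
      refine le_csSup (oj_spec_bdd A) ⟨(Real.sqrt S)⁻¹ • x, ?_, rfl⟩
      simp only [Pi.smul_apply, smul_eq_mul, mul_pow, ← Finset.mul_sum, ← hS]
      rw [inv_pow, Real.sq_sqrt hS0, inv_mul_cancel₀ h0.ne']
    have := (Real.sqrt_le_iff.mp hk).2
    simp only [Matrix.mulVec_smul, Pi.smul_apply, smul_eq_mul, mul_pow, ← Finset.mul_sum] at this
    rw [inv_pow, Real.sq_sqrt hS0, inv_mul_le_iff₀ h0] at this
    linarith

lemma oj_col {m n : ℕ} (A : Matrix (Fin m) (Fin n) ℝ) (j : Fin n) :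
    ∑ i, A i j ^ 2 ≤ ‖A‖ ^ 2 := by
  have := oj_le_nrm A (Pi.single j 1)
  simpa [Pi.single_apply] using this

lemma oj_row {m n : ℕ} (A : Matrix (Fin m) (Fin n) ℝ) (i : Fin m) :
    ∑ j, A i j ^ 2 ≤ ‖A‖ ^ 2 := by
  have := oj_col Aᴴ i
  rw [Matrix.l2_opNorm_conjTranspose] at this
  simpa using this

lemma oj_vmv {m n : ℕ} (a : Fin m → ℝ) (b : Fin n → ℝ) (α β : ℝ) (hα : 0 ≤ α) (hβ : 0 ≤ β)
    (ha : ∑ i, a i ^ 2 ≤ α ^ 2) (hb : ∑ i, b i ^ 2 ≤ β ^ 2) :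
    ‖Matrix.vecMulVec a b‖ ≤ α * β := by
  refine oj_nrm_le _ _ (by positivity) fun x => ?_
  have h1 : ∀ i, (Matrix.vecMulVec a b).mulVec x i = a i * ∑ j, b j * x j := by
    intro i
    simp [Matrix.vecMulVec_mulVec, dotProduct, mul_comm]
  simp only [h1, mul_pow, ← Finset.sum_mul]
  have h2 := Finset.sum_mul_sq_le_sq_mul_sq Finset.univ b x
  have hx : 0 ≤ ∑ j, x j ^ 2 := Finset.sum_nonneg fun _ _ => sq_nonneg _
  calc _ ≤ α ^ 2 * ((∑ i, b i ^ 2) * ∑ j, x j ^ 2) := by gcongr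
    _ ≤ α ^ 2 * (β ^ 2 * ∑ j, x j ^ 2) := by gcongr
    _ = _ := by ring

lemma oj_psd {n : ℕ} (y : Fin n → ℝ) (c : ℝ) (hc : 0 ≤ c) (hy : ∑ i, y i ^ 2 ≤ c) :
    ‖Matrix.vecMulVec y y - (c / 2) • (1 : Matrix (Fin n) (Fin n) ℝ)‖ ≤ c / 2 := by
  refine oj_nrm_le _ _ (by positivity) fun x => ?_
  set t := ∑ j, y j * x j with ht
  have h1 : ∀ i, (Matrix.vecMulVec y y - (c / 2) • (1 : Matrix (Fin n) (Fin n) ℝ)).mulVec x i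
      = y i * t - c / 2 * x i := by
    intro i
    simp [Matrix.sub_mulVec, Matrix.vecMulVec_mulVec, dotProduct, mul_comm, ht,
      Matrix.smul_mulVec]
  have h2 : ∑ i, (y i * t - c / 2 * x i) ^ 2
      = t ^ 2 * ∑ i, y i ^ 2 - c * t * t + (c / 2) ^ 2 * ∑ i, x i ^ 2 := by
    have h3 : c * t * t = ∑ i, c * t * (y i * x i) := by rw [← Finset.mul_sum]
    rw [h3, Finset.mul_sum _ _ (t ^ 2), Finset.mul_sum _ _ ((c / 2) ^ 2), ← Finset.sum_sub_distrib,
      ← Finset.sum_add_distrib]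
    refine Finset.sum_congr rfl fun i _ => ?_
    ring
  simp only [h1]
  rw [h2]
  nlinarith [sq_nonneg t]

lemma oj_N1 {m n : ℕ} (a : Fin m → ℝ) (b : Fin n → ℝ) (T : Matrix (Fin m) (Fin n) ℝ)
    (c τ : ℝ) (hc : 0 ≤ c) (ha : ∑ i, a i ^ 2 ≤ c) (hb : ∑ i, b i ^ 2 ≤ c) (hT : ‖T‖ ≤ τ) :
    ‖Matrix.vecMulVec a a * T - T * Matrix.vecMulVec b b‖ ≤ c * τ := by
  have e : Matrix.vecMulVec a a * T - T * Matrix.vecMulVec b b =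
      (Matrix.vecMulVec a a - (c / 2) • (1 : Matrix (Fin m) (Fin m) ℝ)) * T
      - T * (Matrix.vecMulVec b b - (c / 2) • (1 : Matrix (Fin n) (Fin n) ℝ)) := by
    simp [Matrix.sub_mul, Matrix.mul_sub]
  rw [e]
  have h0 : 0 ≤ ‖T‖ := norm_nonneg _
  calc _ ≤ _ := norm_sub_le _ _
    _ ≤ c / 2 * τ + τ * (c / 2) := by
      refine add_le_add ((Matrix.l2_opNorm_mul _ _).trans ?_) ((Matrix.l2_opNorm_mul _ _).trans ?_)
      · exact mul_le_mul (oj_psd a c hc ha) hT h0 (by positivity)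
      · exact mul_le_mul hT (oj_psd b c hc hb) (norm_nonneg _) (h0.trans hT)
    _ = _ := by ring

def ojHB {m n : ℕ} (F : Fin m → Fin n → ℝ) (C : ℝ) : Prop :=
  ∀ (u : Fin m → ℝ) (v : Fin n → ℝ), (∀ i, 0 ≤ u i) → (∀ j, 0 ≤ v j) →
    ∑ i, ∑ j, u i * v j * F i j ≤ C * (Real.sqrt (∑ i, u i ^ 2) * Real.sqrt (∑ j, v j ^ 2))

lemma ojHB.add {m n : ℕ} {F G : Fin m → Fin n → ℝ} {C D : ℝ} (hF : ojHB F C) (hG : ojHB G D) :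
    ojHB (fun i j => F i j + G i j) (C + D) := by
  intro u v hu hv
  have h1 := hF u v hu hv
  have h2 := hG u v hu hv
  simp only [mul_add, Finset.sum_add_distrib, add_mul]
  linarith

lemma ojHB.smul {m n : ℕ} {F : Fin m → Fin n → ℝ} {C : ℝ} (hF : ojHB F C) (r : ℝ) (hr : 0 ≤ r) :
    ojHB (fun i j => r * F i j) (r * C) := by
  intro u v hu hv
  have h1 := mul_le_mul_of_nonneg_left (hF u v hu hv) hr
  rw [Finset.mul_sum] at h1
  simp only [Finset.mul_sum] at h1
  rw [mul_assoc]
  refine le_trans (le_of_eq ?_) h1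
  refine Finset.sum_congr rfl fun i _ => Finset.sum_congr rfl fun j _ => ?_
  ring

lemma ojHB.mono {m n : ℕ} {F G : Fin m → Fin n → ℝ} {C : ℝ} (hF : ojHB F C)
    (h : ∀ i j, G i j ≤ F i j) : ojHB G C := by
  intro u v hu hv
  refine le_trans ?_ (hF u v hu hv)
  refine Finset.sum_le_sum fun i _ => Finset.sum_le_sum fun j _ => ?_
  exact mul_le_mul_of_nonneg_left (h i j) (mul_nonneg (hu i) (hv j))

lemma ojHB.mul {m n : ℕ} (A B : Fin m → Fin n → ℝ) (a b : ℝ) (ha : 0 ≤ a) (hb : 0 ≤ b)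
    (hA : ∀ i, ∑ j, A i j ^ 2 ≤ a ^ 2) (hB : ∀ j, ∑ i, B i j ^ 2 ≤ b ^ 2) :
    ojHB (fun i j => |A i j| * |B i j|) (a * b) := by
  intro u v hu hv
  have hU : 0 ≤ ∑ i, u i ^ 2 := Finset.sum_nonneg fun _ _ => sq_nonneg _
  have hW : 0 ≤ ∑ i, v i ^ 2 := Finset.sum_nonneg fun _ _ => sq_nonneg _
  have h := Finset.sum_mul_sq_le_sq_mul_sq (Finset.univ : Finset (Fin m × Fin n))
    (fun q => u q.1 * |A q.1 q.2|) (fun q => v q.2 * |B q.1 q.2|)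
  have e1 : ∑ q : Fin m × Fin n, (u q.1 * |A q.1 q.2|) * (v q.2 * |B q.1 q.2|)
      = ∑ i, ∑ j, u i * v j * (|A i j| * |B i j|) := by
    rw [Fintype.sum_prod_type]
    refine Finset.sum_congr rfl fun i _ => Finset.sum_congr rfl fun j _ => ?_
    ring
  have e2 : ∑ q : Fin m × Fin n, (u q.1 * |A q.1 q.2|) ^ 2 ≤ (∑ i, u i ^ 2) * a ^ 2 := by
    rw [Fintype.sum_prod_type, Finset.sum_mul]
    refine Finset.sum_le_sum fun i _ => ?_
    simp only [mul_pow, sq_abs, ← Finset.mul_sum]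
    exact mul_le_mul_of_nonneg_left (hA i) (sq_nonneg _)
  have e3 : ∑ q : Fin m × Fin n, (v q.2 * |B q.1 q.2|) ^ 2 ≤ (∑ i, v i ^ 2) * b ^ 2 := by
    rw [Fintype.sum_prod_type_right, Finset.sum_mul]
    refine Finset.sum_le_sum fun i _ => ?_
    simp only [mul_pow, sq_abs, ← Finset.mul_sum]
    exact mul_le_mul_of_nonneg_left (hB i) (sq_nonneg _)
  rw [e1] at h
  refine (abs_le_of_sq_le_sq' ?_ (by positivity)).2
  refine h.trans ?_
  calc _ ≤ ((∑ i, u i ^ 2) * a ^ 2) * ((∑ i, v i ^ 2) * b ^ 2) :=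
        mul_le_mul e2 e3 (Finset.sum_nonneg fun _ _ => sq_nonneg _) (by positivity)
    _ = _ := by rw [mul_pow, mul_pow, mul_pow, Real.sq_sqrt hU, Real.sq_sqrt hW]; ring

lemma ojHB.spec {m n : ℕ} (R : Matrix (Fin m) (Fin n) ℝ) (C : ℝ) (hC : 0 ≤ C)
    (h : ojHB (fun i j => |R i j|) C) : specNorm R ≤ C := by
  refine csSup_le ⟨0, 0, by simp, by simp⟩ ?_
  rintro c ⟨x, hx, rfl⟩
  set w := R.mulVec x with hw
  have hh := h (fun i => |w i|) (fun j => |x j|) (fun _ => abs_nonneg _) (fun _ => abs_nonneg _)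
  simp only [sq_abs] at hh
  have hW : 0 ≤ ∑ i, w i ^ 2 := Finset.sum_nonneg fun _ _ => sq_nonneg _
  have h1 : ∑ i, w i ^ 2 ≤ ∑ i, ∑ j, |w i| * |x j| * |R i j| := by
    refine Finset.sum_le_sum fun i _ => ?_
    have : |w i| ≤ ∑ j, |x j| * |R i j| := by
      rw [hw, Matrix.mulVec, dotProduct]
      refine (Finset.abs_sum_le_sum_abs _ _).trans (Finset.sum_le_sum fun j _ => ?_)
      rw [abs_mul, mul_comm]
    rw [← sq_abs, sq]
    simp only [mul_assoc, ← Finset.mul_sum]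
    exact mul_le_mul_of_nonneg_left this (abs_nonneg _)
  have h2 := h1.trans hh
  have hs : Real.sqrt (∑ j, x j ^ 2) ≤ 1 := Real.sqrt_le_one.mpr hx
  set S := Real.sqrt (∑ i, w i ^ 2) with hS
  have hS0 : 0 ≤ S := Real.sqrt_nonneg _
  rw [← Real.sq_sqrt hW, ← hS] at h2
  have h3 : S ^ 2 ≤ C * S := by
    refine h2.trans (mul_le_mul_of_nonneg_left ?_ hC)
    nlinarith
  by_contra hcon
  push Not at hcon
  nlinarith

lemma ojHB.integral {Ω : Type} [MeasurableSpace Ω] (μ : Measure Ω) [IsProbabilityMeasure μ]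
    {m n : ℕ} (F : Ω → Fin m → Fin n → ℝ) (C : ℝ)
    (hi : ∀ i j, Integrable (fun ω => F ω i j) μ) (h : ∀ᵐ ω ∂μ, ojHB (F ω) C) :
    ojHB (fun i j => ∫ ω, F ω i j ∂μ) C := by
  intro u v hu hv
  have hint : Integrable (fun ω => ∑ i, ∑ j, u i * v j * F ω i j) μ :=
    integrable_finsetSum _ fun i _ => integrable_finsetSum _ fun j _ => (hi i j).const_mul _
  have e : ∑ i, ∑ j, u i * v j * ∫ ω, F ω i j ∂μ = ∫ ω, ∑ i, ∑ j, u i * v j * F ω i j ∂μ := by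
    rw [integral_finsetSum _ fun i _ => integrable_finsetSum _ fun j _ => (hi i j).const_mul _]
    refine Finset.sum_congr rfl fun i _ => ?_
    rw [integral_finsetSum _ fun j _ => (hi i j).const_mul _]
    refine Finset.sum_congr rfl fun j _ => ?_
    rw [integral_const_mul]
  rw [e]
  have := integral_mono_ae hint (integrable_const _) (h.mono fun ω hω => hω u v hu hv)
  simpa using this

lemma oj_jensen {Ω : Type} [MeasurableSpace Ω] (μ : Measure Ω) [IsProbabilityMeasure μ]
    (f : Ω → ℝ) (hf : Integrable f μ) (hf2 : Integrable (fun ω => f ω ^ 2) μ) :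
    (∫ ω, f ω ∂μ) ^ 2 ≤ ∫ ω, f ω ^ 2 ∂μ := by
  set c := ∫ ω, f ω ∂μ with hc
  have h : 0 ≤ ∫ ω, (f ω - c) ^ 2 ∂μ := integral_nonneg fun _ => sq_nonneg _
  have e : (fun ω => (f ω - c) ^ 2) = fun ω => (f ω ^ 2 - 2 * c * f ω) + c ^ 2 := by
    funext ω; ring
  have i1 : Integrable (fun ω => f ω ^ 2 - 2 * c * f ω) μ := hf2.sub (hf.const_mul _)
  rw [e, integral_add i1 (integrable_const _),
    integral_sub hf2 (hf.const_mul _), integral_const_mul, ← hc] at h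
  simp at h
  nlinarith

lemma oj_sum_int_sq {Ω : Type} [MeasurableSpace Ω] (μ : Measure Ω) [IsProbabilityMeasure μ]
    {n : ℕ} (f : Ω → Fin n → ℝ) (C : ℝ)
    (hf : ∀ j, Integrable (fun ω => f ω j) μ) (hf2 : ∀ j, Integrable (fun ω => f ω j ^ 2) μ)
    (h : ∀ᵐ ω ∂μ, ∑ j, f ω j ^ 2 ≤ C) :
    ∑ j, (∫ ω, f ω j ∂μ) ^ 2 ≤ C := by
  calc _ ≤ ∑ j, ∫ ω, f ω j ^ 2 ∂μ := Finset.sum_le_sum fun j _ => oj_jensen μ _ (hf j) (hf2 j)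
    _ = ∫ ω, ∑ j, f ω j ^ 2 ∂μ := (integral_finsetSum _ fun j _ => hf2 j).symm
    _ ≤ C := by
      have := integral_mono_ae (integrable_finsetSum _ fun j _ => hf2 j) (integrable_const C) h
      simpa using this

/-- bounded measurable functions -/
def ojB {Ω : Type} [MeasurableSpace Ω] (μ : Measure Ω) (f : Ω → ℝ) : Prop :=
  Measurable f ∧ ∃ C, ∀ᵐ ω ∂μ, |f ω| ≤ C

lemma ojB.int {Ω : Type} [MeasurableSpace Ω] {μ : Measure Ω} [IsProbabilityMeasure μ] {f : Ω → ℝ}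
    (h : ojB μ f) : Integrable f μ := by
  obtain ⟨hm, C, hC⟩ := h
  exact Integrable.of_bound hm.aestronglyMeasurable C hC

lemma ojB.add {Ω : Type} [MeasurableSpace Ω] {μ : Measure Ω} {f g : Ω → ℝ}
    (hf : ojB μ f) (hg : ojB μ g) : ojB μ (fun ω => f ω + g ω) := by
  obtain ⟨hm, C, hC⟩ := hf
  obtain ⟨gm, D, hD⟩ := hg
  refine ⟨hm.add gm, C + D, ?_⟩
  filter_upwards [hC, hD] with ω h1 h2
  exact (abs_add_le _ _).trans (add_le_add h1 h2)

lemma ojB.mul {Ω : Type} [MeasurableSpace Ω] {μ : Measure Ω} {f g : Ω → ℝ}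
    (hf : ojB μ f) (hg : ojB μ g) : ojB μ (fun ω => f ω * g ω) := by
  obtain ⟨hm, C, hC⟩ := hf
  obtain ⟨gm, D, hD⟩ := hg
  refine ⟨hm.mul gm, C * D, ?_⟩
  filter_upwards [hC, hD] with ω h1 h2
  rw [abs_mul]
  exact mul_le_mul h1 h2 (abs_nonneg _) ((abs_nonneg _).trans h1)

lemma ojB.abs {Ω : Type} [MeasurableSpace Ω] {μ : Measure Ω} {f : Ω → ℝ}
    (hf : ojB μ f) : ojB μ (fun ω => |f ω|) := by
  obtain ⟨hm, C, hC⟩ := hf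
  refine ⟨hm.abs, C, ?_⟩
  simpa using hC

lemma ojB.const {Ω : Type} [MeasurableSpace Ω] {μ : Measure Ω} (c : ℝ) :
    ojB μ (fun _ => c) := ⟨measurable_const, |c|, by simp⟩

lemma ojB.sub {Ω : Type} [MeasurableSpace Ω] {μ : Measure Ω} {f g : Ω → ℝ}
    (hf : ojB μ f) (hg : ojB μ g) : ojB μ (fun ω => f ω - g ω) := by
  have := hf.add ((ojB.const (-1)).mul hg)
  convert this using 2
  ring

lemma ojB.sq {Ω : Type} [MeasurableSpace Ω] {μ : Measure Ω} {f : Ω → ℝ}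
    (hf : ojB μ f) : ojB μ (fun ω => f ω ^ 2) := by
  simpa [pow_two] using hf.mul hf

lemma ojB.sum {Ω : Type} [MeasurableSpace Ω] {μ : Measure Ω} {n : ℕ} {f : Fin n → Ω → ℝ}
    (hf : ∀ i, ojB μ (f i)) : ojB μ (fun ω => ∑ i, f i ω) := by
  choose hm C hC using hf
  refine ⟨Finset.measurable_sum _ fun i _ => hm i, ∑ i, C i, ?_⟩
  filter_upwards [MeasureTheory.ae_all_iff.mpr hC] with ω h
  exact (Finset.abs_sum_le_sum_abs _ _).trans (Finset.sum_le_sum fun i _ => h i)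

lemma oj_var {Ω : Type} [MeasurableSpace Ω] (μ : Measure Ω) [IsProbabilityMeasure μ]
    (f : Ω → ℝ) (hf : ojB μ f) :
    ∫ ω, (f ω - ∫ ω', f ω' ∂μ) ^ 2 ∂μ = ∫ ω, f ω ^ 2 ∂μ - (∫ ω, f ω ∂μ) ^ 2 := by
  set c := ∫ ω, f ω ∂μ with hc
  have e : (fun ω => (f ω - c) ^ 2) = fun ω => (f ω ^ 2 - 2 * c * f ω) + c ^ 2 := by
    funext ω; ring
  have i1 : Integrable (fun ω => f ω ^ 2 - 2 * c * f ω) μ := hf.sq.int.sub (hf.int.const_mul _)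
  rw [e, integral_add i1 (integrable_const _),
    integral_sub hf.sq.int (hf.int.const_mul _), integral_const_mul, ← hc]
  simp
  ring

lemma oj_scalar {Ω : Type} [MeasurableSpace Ω] (μ : Measure Ω) [IsProbabilityMeasure μ]
    (M N1 N2 ζ : Ω → ℝ) (s η : ℝ) (hM : ojB μ M) (h1 : ojB μ N1) (h2 : ojB μ N2) (hz : ojB μ ζ)
    (hM0 : ∫ ω, M ω ∂μ = 0) (h20 : ∫ ω, N2 ω ∂μ = 0)
    (hs : 0 ≤ s) (hs1 : s ≤ 1 / 2) (hzs : ∀ᵐ ω ∂μ, |ζ ω| ≤ 2 * s) :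
    |(∫ ω, (η * ((1 - ζ ω) * (M ω + N1 ω + N2 ω)) -
        ∫ ω', η * ((1 - ζ ω') * (M ω' + N1 ω' + N2 ω')) ∂μ) ^ 2 ∂μ)
      - η ^ 2 * ∫ ω, (M ω - ∫ ω', M ω' ∂μ) ^ 2 ∂μ| ≤
    η ^ 2 * (2 * (∫ ω, |M ω| * |N1 ω + N2 ω| ∂μ) + ∫ ω, |N1 ω + N2 ω| * |N1 ω + N2 ω| ∂μ
      + 6 * s * ∫ ω, |M ω + N1 ω + N2 ω| * |M ω + N1 ω + N2 ω| ∂μ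
      + 2 * (|∫ ω, N1 ω ∂μ| * |∫ ω, ζ ω * (M ω + N1 ω + N2 ω) ∂μ|)) := by
  have hA := (hM.add h1).add h2
  have hN := h1.add h2
  have hzA := hz.mul hA
  rw [oj_var μ _ hM, oj_var μ _ ((ojB.const η).mul (((ojB.const 1).sub hz).mul hA)), hM0]
  set A := fun ω => M ω + N1 ω + N2 ω with hAdef
  set N := fun ω => N1 ω + N2 ω with hNdef
  have eA : ∫ ω, A ω ∂μ = ∫ ω, N1 ω ∂μ := by
    rw [hAdef, integral_add (hM.add h1).int h2.int, integral_add hM.int h1.int, hM0, h20]; ring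
  have eN : ∫ ω, N ω ∂μ = ∫ ω, N1 ω ∂μ := by
    rw [hNdef, integral_add h1.int h2.int, h20]; ring
  have e1 : ∫ ω, η * ((1 - ζ ω) * A ω) ∂μ = η * (∫ ω, N1 ω ∂μ - ∫ ω, ζ ω * A ω ∂μ) := by
    rw [integral_const_mul, ← eA, ← integral_sub hA.int hzA.int]
    congr 2; funext ω; ring
  have i1 := (hM.mul hN).int
  have i2 := hN.sq.int
  have i3 := (hz.mul hA.sq).int
  have i4 := hzA.sq.int
  have e2 : ∫ ω, (η * ((1 - ζ ω) * A ω)) ^ 2 ∂μ = η ^ 2 * (∫ ω, M ω ^ 2 ∂μ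
      + 2 * (∫ ω, M ω * N ω ∂μ) + ∫ ω, N ω ^ 2 ∂μ - 2 * (∫ ω, ζ ω * A ω ^ 2 ∂μ)
      + ∫ ω, (ζ ω * A ω) ^ 2 ∂μ) := by
    have j1 : Integrable (fun ω => M ω ^ 2 + 2 * (M ω * N ω)) μ := hM.sq.int.add (i1.const_mul 2)
    have j2 : Integrable (fun ω => M ω ^ 2 + 2 * (M ω * N ω) + N ω ^ 2) μ := j1.add i2
    have j3 : Integrable (fun ω => M ω ^ 2 + 2 * (M ω * N ω) + N ω ^ 2 - 2 * (ζ ω * A ω ^ 2)) μ :=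
      j2.sub (i3.const_mul 2)
    rw [← integral_const_mul 2, ← integral_const_mul 2, ← integral_add hM.sq.int (i1.const_mul 2),
      ← integral_add j1 i2, ← integral_sub j2 (i3.const_mul 2), ← integral_add j3 i4,
      ← integral_const_mul]
    congr 1; funext ω; simp only [hAdef, hNdef]; ring
  have b1 : |∫ ω, M ω * N ω ∂μ| ≤ ∫ ω, |M ω| * |N ω| ∂μ := by
    refine (abs_integral_le_integral_abs).trans (le_of_eq ?_)
    simp [abs_mul]
  have b2 : (∫ ω, N1 ω ∂μ) ^ 2 ≤ ∫ ω, N ω ^ 2 ∂μ := eN ▸ oj_jensen μ N hN.int i2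
  have b3 : (∫ ω, ζ ω * A ω ∂μ) ^ 2 ≤ ∫ ω, (ζ ω * A ω) ^ 2 ∂μ := oj_jensen μ _ hzA.int i4
  have b4 : |∫ ω, ζ ω * A ω ^ 2 ∂μ| ≤ 2 * s * ∫ ω, A ω ^ 2 ∂μ := by
    refine (abs_integral_le_integral_abs).trans ?_
    rw [← integral_const_mul]
    refine integral_mono_ae i3.abs (hA.sq.int.const_mul _) ?_
    filter_upwards [hzs] with ω h
    simp only [abs_mul, abs_pow, sq_abs]
    exact mul_le_mul_of_nonneg_right h (sq_nonneg _)
  have b5 : ∫ ω, (ζ ω * A ω) ^ 2 ∂μ ≤ 2 * s * ∫ ω, A ω ^ 2 ∂μ := by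
    rw [← integral_const_mul]
    refine integral_mono_ae i4 (hA.sq.int.const_mul _) ?_
    filter_upwards [hzs] with ω h
    simp only [mul_pow]
    refine mul_le_mul_of_nonneg_right ?_ (sq_nonneg _)
    rw [← sq_abs]
    nlinarith [abs_nonneg (ζ ω)]
  have q1 : ∫ ω, |N ω| * |N ω| ∂μ = ∫ ω, N ω ^ 2 ∂μ := by simp [abs_mul_abs_self, sq]
  have q2 : ∫ ω, |A ω| * |A ω| ∂μ = ∫ ω, A ω ^ 2 ∂μ := by simp [abs_mul_abs_self, sq]
  change |_| ≤ η ^ 2 * (2 * (∫ ω, |M ω| * |N ω| ∂μ) + ∫ ω, |N ω| * |N ω| ∂μ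
      + 6 * s * ∫ ω, |A ω| * |A ω| ∂μ + 2 * (|∫ ω, N1 ω ∂μ| * |∫ ω, ζ ω * A ω ∂μ|))
  rw [q1, q2, e1, e2, ← abs_mul]
  generalize (∫ ω, N1 ω ∂μ) = n at *
  generalize (∫ ω, ζ ω * A ω ∂μ) = z at *
  have e3 : ∀ a b c d e : ℝ, η ^ 2 * (a + 2 * b + c - 2 * d + e) - (η * (n - z)) ^ 2
      - η ^ 2 * (a - 0 ^ 2) = η ^ 2 * (2 * b + (c - n ^ 2) - 2 * d + (e - z ^ 2) + 2 * (n * z)) := by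
    intros; ring
  rw [e3, abs_mul, abs_of_nonneg (sq_nonneg η)]
  refine mul_le_mul_of_nonneg_left ?_ (sq_nonneg η)
  have := abs_le.mp b1
  have := abs_le.mp b4
  have := neg_abs_le (n * z)
  have := le_abs_self (n * z)
  have := sq_nonneg n
  have := sq_nonneg z
  rw [abs_le]
  constructor <;> linarith

lemma oj_sum_split {d p : ℕ} (h : p ≤ d) (f : Fin d → ℝ) :
    ∑ i, f i = ∑ j : Fin p, f (Fin.castLE h j)
      + ∑ i : Fin (d - p), f ⟨p + i, by have := i.isLt; omega⟩ := by
  have e : p + (d - p) = d := by omega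
  rw [← Equiv.sum_comp (finCongr e) f, Fin.sum_univ_add]
  rfl

lemma oj_Tplus {d p : ℕ} (h : p ≤ d) (V : Matrix (Fin d) (Fin p) ℝ)
    (hVtop : IsUnit (topBlock h V)) (y : Fin d → ℝ) (η : ℝ)
    (T : Matrix (Fin (d - p)) (Fin p) ℝ) (hT : T = botBlock V * (topBlock h V)⁻¹)
    (yt : Fin p → ℝ) (hyt : yt = fun j => y (Fin.castLE h j))
    (yb : Fin (d - p) → ℝ) (hyb : yb = fun i : Fin (d - p) => y ⟨p + i, by have := i.isLt; omega⟩)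
    (w : Fin p → ℝ) (hw : w = yt + yb ᵥ* T)
    (hξ : 1 + η * (w ⬝ᵥ yt) ≠ 0) :
    botBlock (((1 : Matrix (Fin d) (Fin d) ℝ) + η • Matrix.vecMulVec y y) * V) *
        (topBlock h (((1 : Matrix (Fin d) (Fin d) ℝ) + η • Matrix.vecMulVec y y) * V))⁻¹ - T
      = (η / (1 + η * (w ⬝ᵥ yt))) • Matrix.vecMulVec (yb - T *ᵥ yt) w := by
  set Vt := topBlock h V with hVt
  have hdet : IsUnit Vt.det := (Matrix.isUnit_iff_isUnit_det _).mp hVtop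
  have hbot : botBlock V = T * Vt := by
    rw [hT, Matrix.mul_assoc, Matrix.nonsing_inv_mul _ hdet, Matrix.mul_one]
  have hz : y ᵥ* V = w ᵥ* Vt := by
    rw [hw, Matrix.add_vecMul, Matrix.vecMul_vecMul, ← hbot]
    funext j
    simp only [Matrix.vecMul, dotProduct, Pi.add_apply, hyt, hyb, hVt]
    rw [oj_sum_split h]
    rfl
  have hVp : ((1 : Matrix (Fin d) (Fin d) ℝ) + η • Matrix.vecMulVec y y) * V
      = V + η • Matrix.vecMulVec y (w ᵥ* Vt) := by
    rw [Matrix.add_mul, Matrix.one_mul, Matrix.smul_mul, Matrix.vecMulVec_mul, hz]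
  rw [hVp]
  set ξ := η * (w ⬝ᵥ yt) with hxi
  have htop : topBlock h (V + η • Matrix.vecMulVec y (w ᵥ* Vt))
      = (1 + η • Matrix.vecMulVec yt w) * Vt := by
    rw [Matrix.add_mul, Matrix.one_mul, Matrix.smul_mul, Matrix.vecMulVec_mul, hVt, hyt]
    rfl
  have hbp : botBlock (V + η • Matrix.vecMulVec y (w ᵥ* Vt))
      = (T + η • Matrix.vecMulVec yb w) * Vt := by
    rw [Matrix.add_mul, Matrix.smul_mul, Matrix.vecMulVec_mul, ← hbot, hyb]
    rfl
  rw [htop, hbp]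
  set P := (1 : Matrix (Fin p) (Fin p) ℝ) + η • Matrix.vecMulVec yt w with hP
  have hPinv : (1 - (η / (1 + ξ)) • Matrix.vecMulVec yt w) * P = 1 := by
    rw [hP, Matrix.mul_add, Matrix.mul_one, Matrix.sub_mul, Matrix.one_mul, Matrix.smul_mul,
      Matrix.mul_smul, Matrix.vecMulVec_mul_vecMulVec]
    ext i j
    simp only [Matrix.add_apply, Matrix.sub_apply, Matrix.smul_apply, Matrix.vecMulVec_apply,
      Pi.smul_apply, smul_eq_mul]
    field_simp
    rw [hxi]
    ring
  have hPu : IsUnit P.det := by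
    have := congrArg Matrix.det hPinv
    rw [Matrix.det_mul, Matrix.det_one] at this
    exact IsUnit.of_mul_eq_one_right _ this
  have hQ : IsUnit (P * Vt).det := by rw [Matrix.det_mul]; exact hPu.mul hdet
  have key : (T + η • Matrix.vecMulVec yb w) * Vt =
      (T + (η / (1 + ξ)) • Matrix.vecMulVec (yb - T *ᵥ yt) w) * (P * Vt) := by
    rw [← Matrix.mul_assoc]
    congr 1
    rw [hP, Matrix.mul_add, Matrix.mul_one, Matrix.add_mul, Matrix.smul_mul, Matrix.mul_smul,
      Matrix.mul_smul, Matrix.vecMulVec_mul_vecMulVec, Matrix.mul_vecMulVec]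
    ext i j
    simp only [Matrix.add_apply, Matrix.smul_apply, Matrix.vecMulVec_apply,
      Pi.smul_apply, smul_eq_mul, Pi.sub_apply]
    field_simp
    rw [hxi]
    ring
  rw [key, Matrix.mul_assoc, Matrix.mul_nonsing_inv _ hQ, Matrix.mul_one, add_sub_cancel_left]

lemma oj_xi {d p : ℕ} (h : p ≤ d) (V : Matrix (Fin d) (Fin p) ℝ) (hV : Vᵀ * V = 1)
    (hVtop : IsUnit (topBlock h V)) (y : Fin d → ℝ)
    (T : Matrix (Fin (d - p)) (Fin p) ℝ) (hT : T = botBlock V * (topBlock h V)⁻¹)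
    (yt : Fin p → ℝ) (hyt : yt = fun j => y (Fin.castLE h j))
    (yb : Fin (d - p) → ℝ) (hyb : yb = fun i : Fin (d - p) => y ⟨p + i, by have := i.isLt; omega⟩)
    (w : Fin p → ℝ) (hw : w = yt + yb ᵥ* T) (τ c : ℝ) (hc : 0 ≤ c) (hτ : ‖T‖ ≤ τ)
    (hyc : ∑ j, yt j ^ 2 ≤ c) (hzc : ∑ j : Fin p, (∑ i, V i j * y i) ^ 2 ≤ c) :
    |w ⬝ᵥ yt| ≤ c * Real.sqrt (1 + τ ^ 2) := by
  set Vt := topBlock h V with hVt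
  have hdet : IsUnit Vt.det := (Matrix.isUnit_iff_isUnit_det _).mp hVtop
  set q := Vt⁻¹ *ᵥ yt with hq
  have hVq : ∀ i, (V *ᵥ q) (Fin.castLE h i) = yt i := by
    intro i
    have : Vt *ᵥ q = yt := by
      rw [hq, Matrix.mulVec_mulVec, Matrix.mul_nonsing_inv _ hdet, Matrix.one_mulVec]
    exact congrFun this i
  have hVq2 : ∀ i : Fin (d - p), (V *ᵥ q) ⟨p + i, by have := i.isLt; omega⟩ = (T *ᵥ yt) i := by
    intro i
    have : botBlock V *ᵥ q = T *ᵥ yt := by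
      rw [hq, Matrix.mulVec_mulVec, hT]
    exact congrFun this i
  have hqn : ∑ j, q j ^ 2 = ∑ j, yt j ^ 2 + ∑ i, (T *ᵥ yt) i ^ 2 := by
    have h1 : q ⬝ᵥ q = (V *ᵥ q) ⬝ᵥ (V *ᵥ q) := by
      generalize q = q'
      rw [Matrix.dotProduct_mulVec, ← Matrix.mulVec_transpose, Matrix.mulVec_mulVec, hV,
        Matrix.one_mulVec]
    simp only [dotProduct, ← sq] at h1
    rw [h1, oj_sum_split h]
    simp only [hVq, hVq2]
  have hqc : ∑ j, q j ^ 2 ≤ (1 + τ ^ 2) * c := by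
    have h1 := oj_le_nrm T yt
    have h2 : ‖T‖ ^ 2 ≤ τ ^ 2 := pow_le_pow_left₀ (norm_nonneg _) hτ 2
    have h3 : 0 ≤ ∑ j, yt j ^ 2 := Finset.sum_nonneg fun _ _ => sq_nonneg _
    rw [hqn]
    nlinarith [sq_nonneg τ, mul_le_mul_of_nonneg_right h2 h3]
  have hwq : w ⬝ᵥ yt = ∑ j, (∑ i, V i j * y i) * q j := by
    have h1 : y ⬝ᵥ (V *ᵥ q) = w ⬝ᵥ yt := by
      rw [hw, add_dotProduct, ← Matrix.dotProduct_mulVec]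
      simp only [dotProduct]
      rw [oj_sum_split h]
      simp only [hVq, hVq2]
      rw [hyb, hyt]
    rw [← h1, Matrix.dotProduct_mulVec]
    simp only [dotProduct, Matrix.vecMul, mul_comm]
  have hcs := Finset.sum_mul_sq_le_sq_mul_sq Finset.univ (fun j => ∑ i, V i j * y i) q
  rw [hwq]
  refine abs_le_of_sq_le_sq (hcs.trans ?_) (by positivity)
  rw [mul_pow, Real.sq_sqrt (by positivity)]
  calc _ ≤ c * ((1 + τ ^ 2) * c) := mul_le_mul hzc hqc
        (Finset.sum_nonneg fun _ _ => sq_nonneg _) hc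
    _ = _ := by ring

lemma oj_arith (L m η s τ r ν₁ : ℝ) (hL : 0 < L) (hm : 0 < m) (hη : 0 < η) (hτ : 0 ≤ τ)
    (hr : 0 < r) (hν : 1 ≤ ν₁) (hrν : r ^ 2 ≤ ν₁) (hs : s = η * (L * m * Real.sqrt (1 + τ ^ 2)))
    (hs1 : s ≤ 1 / 2) (x M n K : ℝ) (hx : x = L * m * ν₁ * τ) (hM : M = r * (L * m))
    (hn : n = r * (L * m) * τ ^ 2) (hK : K = M + x + n) :
    η ^ 2 * (2 * (M * (x + n)) + (x + n) * (x + n) + 6 * s * (K * K) + 2 * (x * (2 * s * K))) ≤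
      2 * ν₁ * r * L ^ 2 * m ^ 2 * η ^ 2 * τ *
          (1 + (1 + ν₁ / r) * τ + τ ^ 2 + τ ^ 3 / 2) +
        8 * r ^ 2 * L ^ 3 * m ^ 3 * η ^ 3 * Real.sqrt (1 + τ ^ 2) *
          (1 + τ ^ 2 + ν₁ / r * τ) ^ 2 := by
  have hs0 : 0 ≤ s := by rw [hs]; positivity
  have hrv : r ≤ ν₁ := by nlinarith
  have e2 : 8 * r ^ 2 * L ^ 3 * m ^ 3 * η ^ 3 * Real.sqrt (1 + τ ^ 2) *
          (1 + τ ^ 2 + ν₁ / r * τ) ^ 2 = η ^ 2 * (8 * s * K ^ 2) := by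
    rw [hs, hK, hx, hM, hn]; field_simp; ring
  have e1 : 2 * ν₁ * r * L ^ 2 * m ^ 2 * η ^ 2 * τ *
          (1 + (1 + ν₁ / r) * τ + τ ^ 2 + τ ^ 3 / 2) =
      η ^ 2 * (2 * M * x + 2 * (L * m) ^ 2 * (ν₁ * r) * τ ^ 2 + 2 * x ^ 2 + 2 * x * n
        + (L * m) ^ 2 * (ν₁ * r) * τ ^ 4) := by
    rw [hx, hM, hn]; field_simp; ring
  rw [e1, e2, ← mul_add]
  refine mul_le_mul_of_nonneg_left ?_ (sq_nonneg η)
  have h1 : M * n ≤ (L * m) ^ 2 * (ν₁ * r) * τ ^ 2 := by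
    have : M * n = (L * m) ^ 2 * (r * r) * τ ^ 2 := by rw [hM, hn]; ring
    rw [this]; gcongr
  have h2 : n * n ≤ (L * m) ^ 2 * (ν₁ * r) * τ ^ 4 := by
    have : n * n = (L * m) ^ 2 * (r * r) * τ ^ 4 := by rw [hn]; ring
    rw [this]; gcongr
  have h3 : 4 * s * (x * K) ≤ 2 * s * K ^ 2 + x ^ 2 := by
    nlinarith [mul_nonneg hs0 (sq_nonneg (x - K)), sq_nonneg x]
  nlinarith

lemma oj_entry {m n : ℕ} (T : Matrix (Fin m) (Fin n) ℝ) (yb : Fin m → ℝ) (yt : Fin n → ℝ) :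
    Matrix.vecMulVec (yb - T *ᵥ yt) (yt + yb ᵥ* T) = Matrix.vecMulVec yb yt
      + (Matrix.vecMulVec yb yb * T - T * Matrix.vecMulVec yt yt)
      + -(T * Matrix.vecMulVec yt yb * T) := by
  rw [Matrix.vecMulVec_mul, Matrix.mul_vecMulVec, Matrix.mul_vecMulVec, Matrix.vecMulVec_mul]
  ext i j
  simp only [Matrix.add_apply, Matrix.sub_apply, Matrix.neg_apply, Matrix.vecMulVec_apply,
    Pi.add_apply, Pi.sub_apply]
  ring

lemma oj_zeta (ξ s : ℝ) (hs : s ≤ 1 / 2) (h : |ξ| ≤ s) :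
    1 + ξ ≠ 0 ∧ |ξ / (1 + ξ)| ≤ 2 * s ∧ 1 - ξ / (1 + ξ) = 1 / (1 + ξ) := by
  have h0 := abs_le.mp h
  have h1 : (1:ℝ) / 2 ≤ 1 + ξ := by linarith
  have h2 : 1 + ξ ≠ 0 := by linarith
  refine ⟨h2, ?_, by field_simp; ring⟩
  rw [abs_div, abs_of_pos (show 0 < 1 + ξ by linarith), div_le_iff₀ (by linarith)]
  nlinarith [abs_nonneg ξ]

end helpers

set_option maxHeartbeats 4000000 in
open scoped Matrix.Norms.L2Operator in
/-- One-step conditional variance remainder bound (Lemma 3.1, item 4(b)): with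
`E[YYᵀ] = Λ`, `H∘ := var∘(Y̲Ȳᵀ)` and `R∘ := var∘(T⁺ − T) − η²H∘`, one has
`‖R∘‖₂ ≤ 2ν₁ν^{1/2}λ_{1∼p}²μ²η²τ(1 + (1+ν₁ν^{-1/2})τ + τ² + τ³/2)
  + 8νλ_{1∼p}³μ³η³(1+τ²)^{1/2}(1 + τ² + ν₁ν^{-1/2}τ)²`. -/
theorem oja_one_step_variance_remainder
    (Ω : Type) [MeasurableSpace Ω] (μ : Measure Ω) [IsProbabilityMeasure μ]
    (d p : ℕ) (hp : 1 ≤ p) (hpd : p < d)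
    (lam : Fin d → ℝ) (hmono : Antitone lam) (hpos : ∀ i, 0 < lam i)
    (V : Matrix (Fin d) (Fin p) ℝ) (hV : Vᵀ * V = 1)
    (hVtop : IsUnit (topBlock hpd.le V))
    (Y : Ω → Fin d → ℝ) (hY : Measurable Y)
    (hcov : ∀ i j, ∫ ω, Y ω i * Y ω j ∂μ = if i = j then lam i else 0)
    (η m κ : ℝ) (hη : 0 < η) (hm : 1 ≤ m) :
    let lam1p : ℝ := ∑ j : Fin p, lam (Fin.castLE hpd.le j)
    let lamRest : ℝ := ∑ i : Fin (d - p), lam ⟨p + i, by have := i.isLt; omega⟩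
    let ν : ℝ := lamRest / lam1p
    let ν₁ : ℝ := max 1 ν
    let T : Matrix (Fin (d - p)) (Fin p) ℝ := botBlock V * (topBlock hpd.le V)⁻¹
    let τ : ℝ := specNorm T
    let Tplus : Ω → Matrix (Fin (d - p)) (Fin p) ℝ := fun ω =>
      botBlock (((1 : Matrix (Fin d) (Fin d) ℝ) + η • Matrix.vecMulVec (Y ω) (Y ω)) * V) *
        (topBlock hpd.le
          (((1 : Matrix (Fin d) (Fin d) ℝ) + η • Matrix.vecMulVec (Y ω) (Y ω)) * V))⁻¹
    let Hcirc : Matrix (Fin (d - p)) (Fin p) ℝ :=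
      Matrix.of fun i j =>
        ∫ ω, (Y ω ⟨p + i, by have := i.isLt; omega⟩ * Y ω (Fin.castLE hpd.le j) -
          ∫ ω', Y ω' ⟨p + i, by have := i.isLt; omega⟩ * Y ω' (Fin.castLE hpd.le j) ∂μ) ^ 2 ∂μ
    let Rcirc : Matrix (Fin (d - p)) (Fin p) ℝ :=
      (Matrix.of fun i j =>
        ∫ ω, ((Tplus ω - T) i j - ∫ ω', (Tplus ω' - T) i j ∂μ) ^ 2 ∂μ) - η ^ 2 • Hcirc
    τ ≤ κ →
    2 * lam1p * Real.sqrt (κ ^ 2 + 1) * m * η ≤ 1 →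
    (∀ᵐ ω ∂μ, Real.sqrt (∑ j : Fin p, (∑ i, V i j * Y ω i) ^ 2) ≤ Real.sqrt (lam1p * m) ∧
      ∀ i, |Y ω i| ≤ Real.sqrt (lam i * m)) →
    specNorm Rcirc ≤
      2 * ν₁ * Real.sqrt ν * lam1p ^ 2 * m ^ 2 * η ^ 2 * τ *
          (1 + (1 + ν₁ / Real.sqrt ν) * τ + τ ^ 2 + τ ^ 3 / 2) +
        8 * ν * lam1p ^ 3 * m ^ 3 * η ^ 3 * Real.sqrt (1 + τ ^ 2) *
          (1 + τ ^ 2 + ν₁ / Real.sqrt ν * τ) ^ 2 := by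
  intro lam1p lamRest ν ν₁ T τ Tplus Hcirc Rcirc hκ hstep hbd
  have hL : 0 < lam1p := Finset.sum_pos (fun _ _ => hpos _) ⟨⟨0, hp⟩, Finset.mem_univ _⟩
  have hLR : 0 < lamRest :=
    Finset.sum_pos (fun _ _ => hpos _) ⟨⟨0, by omega⟩, Finset.mem_univ _⟩
  have hνpos : 0 < ν := div_pos hLR hL
  have hm0 : 0 < m := by linarith
  have hνL : lamRest = ν * lam1p := by simp only [ν]; field_simp
  have hν1 : 1 ≤ ν₁ := le_max_left _ _
  have hνν1 : ν ≤ ν₁ := le_max_right _ _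
  set r := Real.sqrt ν with hr
  have hr0 : 0 < r := Real.sqrt_pos.mpr hνpos
  have hr2 : r ^ 2 = ν := Real.sq_sqrt hνpos.le
  have hτ0 : 0 ≤ τ := oj_spec_nonneg T
  have hTτ : ‖T‖ ≤ τ := oj_nrm_le_spec T
  obtain ⟨s, hs⟩ : ∃ s, s = η * (lam1p * m * Real.sqrt (1 + τ ^ 2)) := ⟨_, rfl⟩
  have hs0 : 0 ≤ s := by rw [hs]; positivity
  have hs1 : s ≤ 1 / 2 := by
    have h1 : Real.sqrt (1 + τ ^ 2) ≤ Real.sqrt (κ ^ 2 + 1) := by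
      apply Real.sqrt_le_sqrt
      nlinarith
    have h2 : η * (lam1p * m * Real.sqrt (1 + τ ^ 2)) ≤ η * (lam1p * m * Real.sqrt (κ ^ 2 + 1)) := by
      gcongr
    rw [hs]; linarith
  obtain ⟨x, hx⟩ : ∃ x, x = lam1p * m * ν₁ * τ := ⟨_, rfl⟩
  obtain ⟨Mb, hMb⟩ : ∃ Mb, Mb = r * (lam1p * m) := ⟨_, rfl⟩
  obtain ⟨nb, hnb⟩ : ∃ nb, nb = r * (lam1p * m) * τ ^ 2 := ⟨_, rfl⟩
  obtain ⟨K, hK⟩ : ∃ K, K = Mb + x + nb := ⟨_, rfl⟩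
  have hx0 : 0 ≤ x := by rw [hx]; positivity
  have hMb0 : 0 ≤ Mb := by rw [hMb]; positivity
  have hnb0 : 0 ≤ nb := by rw [hnb]; positivity
  have hK0 : 0 ≤ K := by rw [hK]; positivity
  have harith := oj_arith lam1p m η s τ r ν₁ hL hm0 hη hτ0 hr0 hν1 (hr2.trans_le hνν1) hs hs1
    x Mb nb K hx hMb hnb hK
  rw [hr2] at harith
  refine le_trans ?_ harith
  -- vectors
  obtain ⟨yt, hyt⟩ : ∃ yt : Ω → Fin p → ℝ, yt = fun ω j => Y ω (Fin.castLE hpd.le j) := ⟨_, rfl⟩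
  obtain ⟨yb, hyb⟩ : ∃ yb : Ω → Fin (d - p) → ℝ,
    yb = fun ω (i : Fin (d - p)) => Y ω ⟨p + i, by have := i.isLt; omega⟩ := ⟨_, rfl⟩
  obtain ⟨M, hM⟩ : ∃ M : Ω → Matrix (Fin (d - p)) (Fin p) ℝ,
    M = fun ω => Matrix.vecMulVec (yb ω) (yt ω) := ⟨_, rfl⟩
  obtain ⟨N1, hN1⟩ : ∃ N1 : Ω → Matrix (Fin (d - p)) (Fin p) ℝ,
    N1 = fun ω => Matrix.vecMulVec (yb ω) (yb ω) * T - T * Matrix.vecMulVec (yt ω) (yt ω) :=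
    ⟨_, rfl⟩
  obtain ⟨N2, hN2⟩ : ∃ N2 : Ω → Matrix (Fin (d - p)) (Fin p) ℝ,
    N2 = fun ω => -(T * Matrix.vecMulVec (yt ω) (yb ω) * T) := ⟨_, rfl⟩
  obtain ⟨w, hw⟩ : ∃ w : Ω → Fin p → ℝ, w = fun ω => yt ω + yb ω ᵥ* T := ⟨_, rfl⟩
  obtain ⟨ξ, hξ⟩ : ∃ ξ : Ω → ℝ, ξ = fun ω => η * (w ω ⬝ᵥ yt ω) := ⟨_, rfl⟩
  obtain ⟨ζ, hζ⟩ : ∃ ζ : Ω → ℝ, ζ = fun ω => ξ ω / (1 + ξ ω) := ⟨_, rfl⟩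
  -- a.e. facts
  have hae : ∀ᵐ ω ∂μ, (∑ j, yt ω j ^ 2 ≤ lam1p * m) ∧ (∑ i, yb ω i ^ 2 ≤ lamRest * m) ∧
      |ξ ω| ≤ s := by
    filter_upwards [hbd] with ω hω
    have hsq : ∀ i, Y ω i ^ 2 ≤ lam i * m := by
      intro i
      have h1 := hω.2 i
      rw [← sq_abs]
      calc _ ≤ (Real.sqrt (lam i * m)) ^ 2 := pow_le_pow_left₀ (abs_nonneg _) h1 2
        _ = _ := Real.sq_sqrt (mul_nonneg (hpos i).le hm0.le)
    have h1 : ∑ j, yt ω j ^ 2 ≤ lam1p * m := by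
      simp only [lam1p, hyt, Finset.sum_mul]
      exact Finset.sum_le_sum fun i _ => hsq _
    have h2 : ∑ j, yb ω j ^ 2 ≤ lamRest * m := by
      simp only [lamRest, hyb, Finset.sum_mul]
      exact Finset.sum_le_sum fun i _ => hsq _
    have h3 : ∑ j : Fin p, (∑ i, V i j * Y ω i) ^ 2 ≤ lam1p * m :=
      (Real.sqrt_le_sqrt_iff (by positivity)).mp hω.1
    refine ⟨h1, h2, ?_⟩
    have h4 := oj_xi hpd.le V hV hVtop (Y ω) T rfl (yt ω) (by rw [hyt]) (yb ω) (by rw [hyb])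
      (w ω) (by rw [hw]) τ (lam1p * m) (by positivity) hTτ h1 h3
    rw [hξ, hs, abs_mul, abs_of_pos hη]
    exact mul_le_mul_of_nonneg_left h4 hη.le
  have hnorm : ∀ᵐ ω ∂μ, ‖M ω‖ ≤ Mb ∧ ‖N1 ω‖ ≤ x ∧ ‖N2 ω‖ ≤ nb ∧ |ζ ω| ≤ 2 * s := by
    filter_upwards [hae] with ω hω
    obtain ⟨h1, h2, h3⟩ := hω
    obtain ⟨b, hb⟩ : ∃ b, b = Real.sqrt (lam1p * m) := ⟨_, rfl⟩
    have hb0 : 0 ≤ b := hb ▸ Real.sqrt_nonneg _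
    have hb2 : b ^ 2 = lam1p * m := by rw [hb, Real.sq_sqrt (by positivity)]
    have h1' : ∑ j, yt ω j ^ 2 ≤ b ^ 2 := by rw [hb2]; exact h1
    have h2' : ∑ j, yb ω j ^ 2 ≤ (r * b) ^ 2 := by
      rw [mul_pow, hb2, hr2, ← mul_assoc, ← hνL]; exact h2
    refine ⟨?_, ?_, ?_, ?_⟩
    · rw [hM, hMb]
      refine (oj_vmv _ _ (r * b) b (by positivity) hb0 h2' h1').trans (le_of_eq ?_)
      rw [← hb2]; ring
    · rw [hN1, hx]
      refine oj_N1 _ _ T (lam1p * m * ν₁) τ (by positivity) (h2.trans ?_) (h1.trans ?_) hTτ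
      · rw [hνL]
        have : 0 ≤ lam1p * m := by positivity
        nlinarith
      · have : 0 ≤ lam1p * m := by positivity
        nlinarith
    · rw [hN2, hnb]
      simp only [norm_neg]
      have h5 := oj_vmv _ _ b (r * b) hb0 (by positivity) h1' h2'
      calc _ ≤ ‖T * Matrix.vecMulVec (yt ω) (yb ω)‖ * ‖T‖ := Matrix.l2_opNorm_mul _ _
        _ ≤ (‖T‖ * ‖Matrix.vecMulVec (yt ω) (yb ω)‖) * ‖T‖ :=
          mul_le_mul_of_nonneg_right (Matrix.l2_opNorm_mul _ _) (norm_nonneg _)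
        _ ≤ (τ * (b * (r * b))) * τ := by gcongr
        _ = _ := by rw [← hb2]; ring
    · rw [hζ]; exact (oj_zeta _ s hs1 h3).2.1
  -- bounded measurability
  have bY : ∀ i, ojB μ (fun ω => Y ω i) := fun i =>
    ⟨(measurable_pi_apply i).comp hY, Real.sqrt (lam i * m), hbd.mono fun ω hω => hω.2 i⟩
  have byt : ∀ i, ojB μ (fun ω => yt ω i) := fun i => by rw [hyt]; exact bY _
  have byb : ∀ i, ojB μ (fun ω => yb ω i) := fun i => by rw [hyb]; exact bY _
  have bTy : ∀ i, ojB μ (fun ω => (T *ᵥ yt ω) i) := fun i => by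
    simp only [Matrix.mulVec, dotProduct]
    exact ojB.sum fun k => (ojB.const _).mul (byt k)
  have byT : ∀ i, ojB μ (fun ω => (yb ω ᵥ* T) i) := fun i => by
    simp only [Matrix.vecMul, dotProduct]
    exact ojB.sum fun k => (byb k).mul (ojB.const _)
  have eM : ∀ i j ω, M ω i j = yb ω i * yt ω j := fun i j ω => by rw [hM]; rfl
  have eN1 : ∀ i j ω, N1 ω i j = yb ω i * (yb ω ᵥ* T) j - (T *ᵥ yt ω) i * yt ω j := by
    intro i j ω
    rw [hN1]
    simp only [Matrix.vecMulVec_mul, Matrix.mul_vecMulVec, Matrix.sub_apply,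
      Matrix.vecMulVec_apply]
  have eN2 : ∀ i j ω, N2 ω i j = 0 - (T *ᵥ yt ω) i * (yb ω ᵥ* T) j := by
    intro i j ω
    rw [hN2]
    simp only [Matrix.vecMulVec_mul, Matrix.mul_vecMulVec, Matrix.neg_apply,
      Matrix.vecMulVec_apply, zero_sub]
  have bM : ∀ i j, ojB μ (fun ω => M ω i j) := fun i j => by
    simp only [eM]; exact (byb i).mul (byt j)
  have bN1 : ∀ i j, ojB μ (fun ω => N1 ω i j) := fun i j => by
    simp only [eN1]; exact ((byb i).mul (byT j)).sub ((bTy i).mul (byt j))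
  have bN2 : ∀ i j, ojB μ (fun ω => N2 ω i j) := fun i j => by
    simp only [eN2]; exact (ojB.const 0).sub ((bTy i).mul (byT j))
  have bξ : ojB μ ξ := by
    rw [hξ, hw]
    simp only [dotProduct, Pi.add_apply]
    exact (ojB.const η).mul (ojB.sum fun k => ((byt k).add (byT k)).mul (byt k))
  have bζ : ojB μ ζ := by
    refine ⟨?_, 2 * s, hnorm.mono fun ω hω => hω.2.2.2⟩
    rw [hζ]
    exact bξ.1.div (measurable_const.add bξ.1)
  have hM0 : ∀ i j, ∫ ω, M ω i j ∂μ = 0 := by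
    intro i j
    simp only [eM, hyb, hyt]
    rw [hcov, if_neg]
    intro h
    have := congrArg Fin.val h
    simp at this
    omega
  have h20 : ∀ i j, ∫ ω, N2 ω i j ∂μ = 0 := by
    intro i j
    have e : (fun ω => N2 ω i j) = fun ω => ∑ k, ∑ l, -(T i k * T l j) * M ω l k := by
      funext ω
      rw [eN2]
      simp only [Matrix.mulVec, Matrix.vecMul, dotProduct, eM]
      rw [Finset.sum_mul_sum, zero_sub, ← Finset.sum_neg_distrib]
      refine Finset.sum_congr rfl fun k _ => ?_
      rw [← Finset.sum_neg_distrib]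
      refine Finset.sum_congr rfl fun l _ => ?_
      ring
    rw [e, integral_finsetSum _ fun k _ => integrable_finsetSum _ fun l _ =>
      (bM l k).int.const_mul _]
    refine Finset.sum_eq_zero fun k _ => ?_
    rw [integral_finsetSum _ fun l _ => (bM l k).int.const_mul _]
    refine Finset.sum_eq_zero fun l _ => ?_
    rw [integral_const_mul, hM0, mul_zero]
  -- T⁺ - T
  have hTp : ∀ᵐ ω ∂μ, ∀ i j, (Tplus ω - T) i j
      = η * ((1 - ζ ω) * (M ω i j + N1 ω i j + N2 ω i j)) := by
    filter_upwards [hae] with ω hω i j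
    obtain ⟨h1, h2, h3⟩ := hω
    obtain ⟨z1, z2, z3⟩ := oj_zeta _ s hs1 h3
    rw [hζ]
    simp only []
    rw [z3]
    have hξω : ξ ω = η * (w ω ⬝ᵥ yt ω) := by rw [hξ]
    have key := oj_Tplus hpd.le V hVtop (Y ω) η T rfl (yt ω) (by rw [hyt]) (yb ω) (by rw [hyb])
      (w ω) (by rw [hw]) (by rw [← hξω]; exact z1)
    have hww : w ω = yt ω + yb ω ᵥ* T := by rw [hw]
    rw [← hξω] at key
    conv at key =>
      rhs
      rw [hww, oj_entry]
    have := congrFun (congrFun key i) j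
    refine this.trans ?_
    rw [hM, hN1, hN2]
    simp only [Matrix.smul_apply, Matrix.add_apply, smul_eq_mul]
    ring
  have hRij : ∀ i j, |Rcirc i j| ≤
      η ^ 2 * (2 * (∫ ω, |M ω i j| * |N1 ω i j + N2 ω i j| ∂μ)
        + ∫ ω, |N1 ω i j + N2 ω i j| * |N1 ω i j + N2 ω i j| ∂μ
        + 6 * s * ∫ ω, |M ω i j + N1 ω i j + N2 ω i j| * |M ω i j + N1 ω i j + N2 ω i j| ∂μ
        + 2 * (|∫ ω, N1 ω i j ∂μ| * |∫ ω, ζ ω * (M ω i j + N1 ω i j + N2 ω i j) ∂μ|)) := by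
    intro i j
    have hsc := oj_scalar μ (fun ω => M ω i j) (fun ω => N1 ω i j) (fun ω => N2 ω i j) ζ s η
      (bM i j) (bN1 i j) (bN2 i j) bζ (hM0 i j) (h20 i j) hs0 hs1
      (hnorm.mono fun ω hω => hω.2.2.2)
    refine le_trans (le_of_eq ?_) hsc
    have hae' : (fun ω => (Tplus ω - T) i j) =ᵐ[μ]
        fun ω => η * ((1 - ζ ω) * (M ω i j + N1 ω i j + N2 ω i j)) :=
      hTp.mono fun ω hω => hω i j
    have hI := integral_congr_ae hae'
    have hI2 : ∫ ω, ((Tplus ω - T) i j - ∫ ω', (Tplus ω' - T) i j ∂μ) ^ 2 ∂μ =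
        ∫ ω, (η * ((1 - ζ ω) * (M ω i j + N1 ω i j + N2 ω i j)) -
          ∫ ω', η * ((1 - ζ ω') * (M ω' i j + N1 ω' i j + N2 ω' i j)) ∂μ) ^ 2 ∂μ := by
      rw [hI]
      refine integral_congr_ae (hae'.mono fun ω hω => ?_)
      simp only at hω ⊢
      rw [hω]
    rw [← hI2]
    simp only [eM, hyb, hyt]
    rfl
  -- norms
  have hrow : ∀ (A : Matrix (Fin (d - p)) (Fin p) ℝ) (c : ℝ), ‖A‖ ≤ c →
      (∀ i, ∑ j, A i j ^ 2 ≤ c ^ 2) ∧ (∀ j, ∑ i, A i j ^ 2 ≤ c ^ 2) := fun A c h =>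
    ⟨fun i => (oj_row A i).trans (pow_le_pow_left₀ (norm_nonneg _) h 2),
      fun j => (oj_col A j).trans (pow_le_pow_left₀ (norm_nonneg _) h 2)⟩
  have hN : ∀ᵐ ω ∂μ, ‖N1 ω + N2 ω‖ ≤ x + nb := hnorm.mono fun ω hω =>
    (norm_add_le _ _).trans (add_le_add hω.2.1 hω.2.2.1)
  have hA : ∀ᵐ ω ∂μ, ‖M ω + N1 ω + N2 ω‖ ≤ K := hnorm.mono fun ω hω => by
    rw [hK]
    exact (norm_add₃_le).trans (add_le_add (add_le_add hω.1 hω.2.1) hω.2.2.1)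
  have bN := fun i j => (bN1 i j).add (bN2 i j)
  have bA := fun i j => ((bM i j).add (bN1 i j)).add (bN2 i j)
  have H1 := ojHB.integral μ (fun ω i j => |M ω i j| * |N1 ω i j + N2 ω i j|) (Mb * (x + nb))
    (fun i j => ((bM i j).abs.mul (bN i j).abs).int) (by
      filter_upwards [hnorm, hN] with ω h1 h2
      exact ojHB.mul (M ω) (N1 ω + N2 ω) _ _ hMb0 (by positivity) (hrow _ _ h1.1).1 (hrow _ _ h2).2)
  have H2 := ojHB.integral μ (fun ω i j => |N1 ω i j + N2 ω i j| * |N1 ω i j + N2 ω i j|)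
    ((x + nb) * (x + nb))
    (fun i j => ((bN i j).abs.mul (bN i j).abs).int) (by
      filter_upwards [hN] with ω h2
      exact ojHB.mul (N1 ω + N2 ω) (N1 ω + N2 ω) _ _ (by positivity) (by positivity)
        (hrow _ _ h2).1 (hrow _ _ h2).2)
  have H3 := ojHB.integral μ (fun ω i j => |M ω i j + N1 ω i j + N2 ω i j| *
      |M ω i j + N1 ω i j + N2 ω i j|) (K * K)
    (fun i j => ((bA i j).abs.mul (bA i j).abs).int) (by
      filter_upwards [hA] with ω h2
      exact ojHB.mul (M ω + N1 ω + N2 ω) (M ω + N1 ω + N2 ω) _ _ hK0 hK0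
        (hrow _ _ h2).1 (hrow _ _ h2).2)
  have H4 := ojHB.mul (fun i j => ∫ ω, N1 ω i j ∂μ)
    (fun i j => ∫ ω, ζ ω * (M ω i j + N1 ω i j + N2 ω i j) ∂μ) x (2 * s * K) hx0 (by positivity)
    (fun i => oj_sum_int_sq μ (fun ω j => N1 ω i j) _ (fun j => (bN1 i j).int)
      (fun j => (bN1 i j).sq.int) (hnorm.mono fun ω hω => (hrow _ _ hω.2.1).1 i))
    (fun j => oj_sum_int_sq μ (fun ω i => ζ ω * (M ω i j + N1 ω i j + N2 ω i j)) _
      (fun i => (bζ.mul (bA i j)).int) (fun i => (bζ.mul (bA i j)).sq.int) (by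
        filter_upwards [hnorm, hA] with ω h1 h2
        have h3 := (hrow _ _ h2).2 j
        simp only [mul_pow, ← Finset.mul_sum]
        rw [← mul_pow 2 s]
        refine mul_le_mul ?_ h3 (Finset.sum_nonneg fun _ _ => sq_nonneg _) (sq_nonneg _)
        rw [← sq_abs]
        exact pow_le_pow_left₀ (abs_nonneg _) h1.2.2.2 2))
  refine ojHB.spec _ _ (by positivity) ?_
  exact (((((H1.smul 2 (by norm_num)).add H2).add (H3.smul (6 * s) (by positivity))).add
    (H4.smul 2 (by norm_num))).smul (η ^ 2) (sq_nonneg η)).mono hRij
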